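/- For every N ≥ 1, the characteristic polynomial of the matrix S_N factors as det(x·I_{N+1} − S_N) = Π_{j=0}^{N} (x − 2·(2j − N)) over ℚ (equivalently over ℂ); in particular, the eigenvalues of S_N are exactly the N+1 even integers 2(2j − N), j = 0, …, N, and the matrix H_N = (1/2)·S_N has eigenvalues 2j − N, j = 0, …, N. -/

import Mathlib

open Matrix Polynomial

/-- The matrix `S_N` of da Fonseca–Kılıç–Pereira, over `ℚ`. -/
def Smat (N : ℕ) : Matrix (Fin (N+1)) (Fin (N+1)) ℚ :=
  Matrix.of fun k l =>
    if (l : ℕ) = (k : ℕ) + 1 then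
      (if (k : ℕ) = N - 1 then (2 * N : ℚ) else ((k : ℕ) + 1 : ℚ))
    else if (l : ℕ) + 1 = (k : ℕ) then ((2 * N + 1 - (k : ℕ) : ℕ) : ℚ)
    else 0

/-- The generating polynomial of the eigenvector for `2 * (i - m)`, where `i + m = N`. -/
noncomputable def eigenPoly (i m : ℕ) : ℚ[X] := ((1 + X) ^ 2) ^ i * ((1 - X) ^ 2) ^ m

theorem reflect_pow_of_reflect_eq {q : ℚ[X]} {d : ℕ} (hd : q.natDegree ≤ d)
    (hq : q.reflect d = q) (n : ℕ) : (q ^ n).reflect (d * n) = q ^ n := by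
  induction n with
  | zero => simp
  | succ n ih =>
    rw [pow_succ, mul_add_one,
      reflect_mul _ _ ((natDegree_pow_le_of_le n hd).trans_eq (mul_comm _ _)) hd, ih, hq]

theorem reflect_one_add_X_sq : (((1 + X) ^ 2 : ℚ[X])).reflect 2 = (1 + X) ^ 2 := by
  have h : ((1 + X) ^ 2 : ℚ[X]) = C 1 * X ^ 0 + C 2 * X ^ 1 + C 1 * X ^ 2 := by
    simp only [map_one, map_ofNat]; ring
  rw [h]
  simp only [reflect_add, reflect_C_mul_X_pow, revAt_le (show 0 ≤ 2 by simp),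
    revAt_le (show 1 ≤ 2 by simp), revAt_le (show 2 ≤ 2 by simp)]
  ring

theorem reflect_one_sub_X_sq : (((1 - X) ^ 2 : ℚ[X])).reflect 2 = (1 - X) ^ 2 := by
  have h : ((1 - X) ^ 2 : ℚ[X]) = C 1 * X ^ 0 + C (-2) * X ^ 1 + C 1 * X ^ 2 := by
    simp only [map_one, map_neg, map_ofNat]; ring
  rw [h]
  simp only [reflect_add, reflect_C_mul_X_pow, revAt_le (show 0 ≤ 2 by simp),
    revAt_le (show 1 ≤ 2 by simp), revAt_le (show 2 ≤ 2 by simp)]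
  ring

theorem reflect_eigenPoly (i m : ℕ) :
    (eigenPoly i m).reflect (2 * i + 2 * m) = eigenPoly i m := by
  have h₁ : ((1 + X) ^ 2 : ℚ[X]).natDegree ≤ 2 := by compute_degree
  have h₂ : ((1 - X) ^ 2 : ℚ[X]).natDegree ≤ 2 := by compute_degree
  rw [eigenPoly, reflect_mul _ _ ((natDegree_pow_le_of_le i h₁).trans_eq (mul_comm _ _))
    ((natDegree_pow_le_of_le m h₂).trans_eq (mul_comm _ _)),
    reflect_pow_of_reflect_eq h₁ reflect_one_add_X_sq,
    reflect_pow_of_reflect_eq h₂ reflect_one_sub_X_sq]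

theorem coeff_eigenPoly_symm (i m k l : ℕ) (h : k + l = 2 * i + 2 * m) :
    (eigenPoly i m).coeff k = (eigenPoly i m).coeff l := by
  conv_lhs => rw [← reflect_eigenPoly, coeff_reflect, revAt_le (by omega)]
  congr 1
  omega

theorem coeff_eigenPoly_zero (i m : ℕ) : (eigenPoly i m).coeff 0 = 1 := by
  simp [eigenPoly, coeff_zero_eq_eval_zero]

theorem derivative_eigenPoly (i m : ℕ) :
    derivative (eigenPoly i m) + C (2 * (i + m) : ℚ) * (X * eigenPoly i m) =
      X * (X * derivative (eigenPoly i m)) + C (2 * (i - m) : ℚ) * eigenPoly i m := by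
  have h (q : ℚ[X]) (n : ℕ) : q * derivative (q ^ n) = C (n : ℚ) * q ^ n * derivative q := by
    cases n with
    | zero => simp
    | succ n => rw [derivative_pow]; simp; ring
  have h₁ := h (1 + X) (2 * i)
  have h₂ := h (1 - X) (2 * m)
  simp only [eigenPoly, ← pow_mul, derivative_mul]
  simp at h₁ h₂ ⊢
  linear_combination (1 - X) * (1 - X) ^ (2 * m) * h₁ + (1 + X) * (1 + X) ^ (2 * i) * h₂

theorem coeff_eigenPoly_one (i m : ℕ) :
    (eigenPoly i m).coeff 1 = 2 * (i - m) * (eigenPoly i m).coeff 0 := by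
  have h := congrArg (coeff · 0) (derivative_eigenPoly i m)
  simpa only [coeff_add, coeff_C_mul, coeff_derivative, coeff_X_mul_zero, mul_zero, add_zero,
    zero_add, Nat.cast_zero, mul_one] using h

theorem coeff_eigenPoly_add_two (i m k : ℕ) :
    (k + 2) * (eigenPoly i m).coeff (k + 2) + (2 * (i + m) - k) * (eigenPoly i m).coeff k =
      2 * (i - m) * (eigenPoly i m).coeff (k + 1) := by
  have h := congrArg (coeff · (k + 1)) (derivative_eigenPoly i m)
  simp only [coeff_add, coeff_C_mul, coeff_derivative, coeff_X_mul] at h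
  cases k with
  | zero => simp at h ⊢; linarith
  | succ k =>
    simp only [coeff_X_mul, coeff_derivative] at h
    push_cast at h ⊢
    linarith

/-- The eigenvector of `Smat (i + m)` for `2 * (i - m)`. -/
noncomputable def eigenVec (i m : ℕ) (k : ℕ) : ℚ :=
  if k = i + m then (eigenPoly i m).coeff k / 2 else (eigenPoly i m).coeff k

theorem Smat_mulVec_zero (N : ℕ) (hN : 1 ≤ N) (v : ℕ → ℚ) :
    (Smat N *ᵥ fun l => v l) 0 = (if N = 1 then 2 * (N : ℚ) else 1) * v 1 := by
  have h : (Smat N *ᵥ fun l => v l) 0 = ∑ l ∈ Finset.range (N + 1),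
      if l = 1 then (if N = 1 then 2 * (N : ℚ) else 1) * v 1 else 0 := by
    rw [← Fin.sum_univ_eq_sum_range, mulVec, dotProduct]
    refine Finset.sum_congr rfl fun l _ => ?_
    simp only [Smat, of_apply, Fin.val_zero]
    grind
  rw [h, Finset.sum_ite_eq']
  rw [if_pos (Finset.mem_range.2 (by omega))]

theorem Smat_mulVec_succ (N k : ℕ) (hk : k + 1 < N + 1) (v : ℕ → ℚ) :
    (Smat N *ᵥ fun l => v l) ⟨k + 1, hk⟩ =
      (if k + 1 = N then 0 else (if k + 2 = N then 2 * (N : ℚ) else k + 2) * v (k + 2)) +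
        (2 * N - k) * v k := by
  have h : (Smat N *ᵥ fun l => v l) ⟨k + 1, hk⟩ = ∑ l ∈ Finset.range (N + 1),
      ((if l = k + 2 then (if k + 2 = N then 2 * (N : ℚ) else k + 2) * v (k + 2) else 0) +
        (if l = k then (2 * N - k) * v k else 0)) := by
    rw [← Fin.sum_univ_eq_sum_range, mulVec, dotProduct]
    refine Finset.sum_congr rfl fun l _ => ?_
    have hc : ((2 * N + 1 - (k + 1) : ℕ) : ℚ) = 2 * N - k := by
      rw [Nat.add_sub_add_right, Nat.cast_sub (by omega)]; push_cast; ring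
    simp only [Smat, of_apply, hc]
    push_cast
    grind
  rw [h, Finset.sum_add_distrib, Finset.sum_ite_eq',
    Finset.sum_ite_eq']
  simp only [Finset.mem_range]
  grind

theorem Smat_mulVec_eigenVec (i m : ℕ) (h : 1 ≤ i + m) :
    (Smat (i + m) *ᵥ fun l => eigenVec i m l) =
      (2 * (i - m) : ℚ) • fun l : Fin (i + m + 1) => eigenVec i m l := by
  ext ⟨k, hk⟩
  rw [Pi.smul_apply, smul_eq_mul]
  cases k with
  | zero =>
    have h₁ := coeff_eigenPoly_one i m
    refine (Smat_mulVec_zero _ h _).trans ?_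
    have h₀ : ¬ 0 = i + m := by omega
    simp only [eigenVec, if_neg h₀, ← h₁, eq_comm (a := i + m)]
    split_ifs with h₂
    · rw [← h₂]
      push_cast
      ring
    · ring
  | succ k =>
    have h₁ := coeff_eigenPoly_add_two i m k
    rw [Smat_mulVec_succ]
    simp only [eigenVec]
    by_cases hN : k + 1 = i + m
    · have h₂ := coeff_eigenPoly_symm i m (k + 2) k (by omega)
      have hc : (k : ℚ) + 1 = i + m := by exact_mod_cast hN
      have hk' : k ≠ i + m := by omega
      rw [if_pos hN, if_neg hk', if_pos hN]
      rw [h₂] at h₁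
      push_cast
      rw [← hc] at h₁ ⊢
      linarith
    · have hk' : k ≠ i + m := by omega
      rw [if_neg hN, if_neg hk', if_neg hN]
      split_ifs with h₃
      · have hc : (k : ℚ) + 2 = i + m := by exact_mod_cast h₃
        push_cast
        rw [← hc] at h₁ ⊢
        linarith
      · push_cast
        linarith

theorem exists_mulVec_eq_smul_iff_eval_charpoly {n : ℕ} (A : Matrix (Fin n) (Fin n) ℚ) (x : ℚ) :
    (∃ u : Fin n → ℚ, u ≠ 0 ∧ A *ᵥ u = x • u) ↔ A.charpoly.eval x = 0 := by
  rw [eval_charpoly, ← exists_mulVec_eq_zero_iff]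
  simp only [sub_mulVec, sub_eq_zero, scalar_apply, ← smul_one_eq_diagonal, smul_mulVec,
    one_mulVec, eq_comm]

theorem charpoly_Smat (N : ℕ) (hN : 1 ≤ N) :
    (Smat N).charpoly = ∏ j : Fin (N + 1), (X - C (2 * (2 * (j : ℕ) - (N : ℚ)))) := by
  refine eq_of_monic_of_dvd_of_natDegree_le (monic_prod_of_monic _ _ fun j _ => monic_X_sub_C _)
    (charpoly_monic _) ?_ ?_
  · refine Finset.prod_dvd_of_coprime (fun a _ b _ hab => ?_) fun j _ => ?_
    · refine pairwise_coprime_X_sub_C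
        (s := fun j : Fin (N + 1) => 2 * (2 * ((j : ℕ) : ℚ) - N)) (fun a b h => ?_) hab
      simpa [Fin.val_inj] using h
    · rw [dvd_iff_isRoot, IsRoot, ← exists_mulVec_eq_smul_iff_eval_charpoly]
      obtain ⟨j, hj⟩ := j
      obtain ⟨m, rfl⟩ := Nat.exists_eq_add_of_le (Nat.le_of_lt_succ hj)
      refine ⟨fun l => eigenVec j m l, fun h => ?_, ?_⟩
      · have h₀ := congrFun h 0
        have h₁ : ¬ 0 = j + m := by omega
        simp [eigenVec, h₁, coeff_eigenPoly_zero] at h₀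
      · rw [Smat_mulVec_eigenVec j m hN]
        congr 1
        push_cast
        ring
  · rw [charpoly_natDegree_eq_dim, natDegree_finsetProd_X_sub_C_eq_card]
    simp

theorem stmt_12 (N : ℕ) (hN : 1 ≤ N) :
    (Smat N).charpoly =
      (∏ j : Fin (N+1), (X - C (2 * (2 * (j : ℕ) - (N : ℚ))))) ∧
      (∀ x : ℚ, (∃ u : Fin (N+1) → ℚ, u ≠ 0 ∧ (Smat N).mulVec u = x • u) ↔
        ∃ j : Fin (N+1), x = 2 * (2 * (j : ℕ) - (N : ℚ))) ∧
      (∀ x : ℚ, (∃ u : Fin (N+1) → ℚ, u ≠ 0 ∧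
          ((2⁻¹ : ℚ) • Smat N).mulVec u = x • u) ↔
        ∃ j : Fin (N+1), x = 2 * (j : ℕ) - (N : ℚ)) := by
  have key (x : ℚ) : (∃ u : Fin (N+1) → ℚ, u ≠ 0 ∧ (Smat N).mulVec u = x • u) ↔
      ∃ j : Fin (N+1), x = 2 * (2 * (j : ℕ) - (N : ℚ)) := by
    rw [exists_mulVec_eq_smul_iff_eval_charpoly, charpoly_Smat N hN, eval_prod,
      Finset.prod_eq_zero_iff]
    simp only [Finset.mem_univ, true_and, eval_sub, eval_X, eval_C, sub_eq_zero]
  refine ⟨charpoly_Smat N hN, key, fun x => ?_⟩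
  have h := key (2 * x)
  simp only [mul_right_inj' (two_ne_zero' ℚ), mul_smul] at h
  rw [← h]
  simp only [smul_mulVec, inv_smul_eq_iff₀ (two_ne_zero' ℚ)]
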